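/- Let Cₙ be an even cycle of order n ≥ 6 with two disjoint copies G₁ (vertices u₁,…,uₙ) and G₂ (vertices v₁,…,vₙ), and let f₀ : V(G₁) → V(G₂) be the constant function f₀(uᵢ) = v₁ for all i. If S is a minimum resolving set of C(Cₙ, f₀) and exactly one vertex of G₁ lies outside the closed neighborhood N[S] (taken in C(Cₙ, f₀)), then S contains at least two vertices of G₂. -/

import Mathlib

/-- The functigraph `C(G, f)`: two disjoint copies of `G` (as `Sum.inl`/`Sum.inr`),
with an edge from each `Sum.inl u` to `Sum.inr (f u)`. -/
def functigraph {V : Type*} (G : SimpleGraph V) (f : V → V) : SimpleGraph (V ⊕ V) :=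
  SimpleGraph.fromRel (fun x y =>
    match x, y with
    | Sum.inl a, Sum.inl b => G.Adj a b
    | Sum.inr a, Sum.inr b => G.Adj a b
    | Sum.inl a, Sum.inr b => f a = b
    | Sum.inr _, Sum.inl _ => False)

/-- `S` is a resolving set of `H`: every pair of distinct vertices is resolved by some `w ∈ S`. -/
def IsResolving {V : Type*} (H : SimpleGraph V) (S : Set V) : Prop :=
  ∀ x y : V, x ≠ y → ∃ w ∈ S, H.dist x w ≠ H.dist y w

/-- The metric dimension of `H`: minimum cardinality of a (finite) resolving set. -/
noncomputable def metricDim {V : Type*} (H : SimpleGraph V) : ℕ :=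
  sInf {k | ∃ S : Set V, IsResolving H S ∧ S.Finite ∧ S.ncard = k}

/-- The cycle graph on `ZMod n` (for `n ≥ 3`): `i` is adjacent to `i ± 1`. -/
def cycGraph (n : ℕ) : SimpleGraph (ZMod n) :=
  SimpleGraph.fromRel (fun i j => j = i + 1)

/-- The closed neighborhood `N[S]` of a set `S` in `H`. -/
def closedNbhd {V : Type*} (H : SimpleGraph V) (S : Set V) : Set V :=
  S ∪ {x | ∃ s ∈ S, H.Adj x s}

/-!
Seen from a vertex of `G₂`, every vertex of `G₁` looks like a pendant vertex hanging on `v₁`. A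
vertex `u` of `G₁` outside `N[S]` and all neighbours of `v₁` in `G₂` are at distance two from every
vertex of `S ∩ G₁`, so only `S ∩ G₂` can tell them apart. If `S ∩ G₂ ⊆ {k}`, then no neighbour of
`v₁` is further from `k` than `v₁`, because `u` is at distance `d(v₁, k) + 1` from `k`. As an even
cycle is bipartite, both neighbours of `v₁` are then at distance `d(v₁, k) - 1` from `k` and are not
resolved.
-/

open SimpleGraph

section Distance

variable {V : Type*} {H : SimpleGraph V}

theorem le_add_walk_length_of_forall_adj {g : V → ℕ∞} (hg : ∀ x y, H.Adj x y → g x ≤ g y + 1)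
    {x y : V} (p : H.Walk x y) : g x ≤ g y + p.length := by
  induction p with
  | nil => simp
  | @cons x z y hxz p ih =>
    calc g x ≤ g z + 1 := hg x z hxz
      _ ≤ g y + p.length + 1 := by gcongr
      _ = g y + (Walk.cons hxz p).length := by
        rw [Walk.length_cons, Nat.cast_add, Nat.cast_one, add_assoc]

theorem le_add_edist_of_forall_adj {g : V → ℕ∞} (hg : ∀ x y, H.Adj x y → g x ≤ g y + 1)
    (x y : V) : g x ≤ g y + H.edist x y := by
  by_cases hxy : H.Reachable x y
  · obtain ⟨p, hp⟩ := hxy.exists_walk_length_eq_edist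
    exact hp ▸ le_add_walk_length_of_forall_adj hg p
  · simp [edist_eq_top_of_not_reachable hxy]

theorem dist_eq_two_of_adj_adj {x y z : V} (hne : x ≠ y) (hxy : ¬H.Adj x y) (hxz : H.Adj x z)
    (hyz : H.Adj y z) : H.dist x y = 2 := by
  have hedist : H.edist x y = 2 := edist_eq_two_iff.2 ⟨hne, hxy, z, hxz, hyz⟩
  rw [SimpleGraph.dist, hedist, ENat.toNat_ofNat]

theorem dist_ne_dist_of_isBipartite_of_adj (hbip : H.IsBipartite) {x y w : V} (hxy : H.Adj x y)
    (hxw : H.Reachable x w) : H.dist x w ≠ H.dist y w := by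
  let c : H.Coloring Bool := hbip.toColoring (by simp)
  obtain ⟨p, hp⟩ := hxw.exists_walk_length_eq_dist
  obtain ⟨q, hq⟩ := (hxy.symm.reachable.trans hxw).exists_walk_length_eq_dist
  intro heq
  have hparity : (c x ↔ c w) ↔ (c y ↔ c w) := by
    rw [← c.even_length_iff_congr p, ← c.even_length_iff_congr q, hp, hq, heq]
  have hcolor : c x ≠ c y := c.valid hxy
  grind

end Distance

theorem IsResolving.exists_inr_mem_dist_ne {V W : Type*} {H : SimpleGraph (V ⊕ W)}
    {S : Set (V ⊕ W)} (hS : IsResolving H S) {x y : V ⊕ W} (hxy : x ≠ y)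
    (hinl : ∀ i, Sum.inl i ∈ S → H.dist x (Sum.inl i) = H.dist y (Sum.inl i)) :
    ∃ k, Sum.inr k ∈ S ∧ H.dist x (Sum.inr k) ≠ H.dist y (Sum.inr k) := by
  obtain ⟨i | k, hmem, hne⟩ := hS x y hxy
  · exact absurd (hinl i hmem) hne
  · exact ⟨k, hmem, hne⟩

section Functigraph

variable {V : Type*} {G : SimpleGraph V} {f : V → V} {a b : V}

@[simp]
theorem functigraph_adj_inl_inr : (functigraph G f).Adj (Sum.inl a) (Sum.inr b) ↔ f a = b := by
  simp [functigraph]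

@[simp]
theorem functigraph_adj_inr_inl : (functigraph G f).Adj (Sum.inr a) (Sum.inl b) ↔ f b = a := by
  simp [functigraph]

@[simp]
theorem functigraph_adj_inr_inr : (functigraph G f).Adj (Sum.inr a) (Sum.inr b) ↔ G.Adj a b := by
  simpa [functigraph, G.adj_comm b a] using G.ne_of_adj

end Functigraph

section ConstantFunctigraph

variable {V : Type*} {G : SimpleGraph V} {v a b u : V} {S : Set (V ⊕ V)}

theorem elim_edist_le_edist_functigraph_const (x : V ⊕ V) :
    Sum.elim (fun _ ↦ G.edist v b + 1) (G.edist · b) x ≤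
      (functigraph G fun _ ↦ v).edist x (Sum.inr b) := by
  have hle : ∀ x y, (functigraph G fun _ ↦ v).Adj x y →
      Sum.elim (fun _ ↦ G.edist v b + 1) (G.edist · b) x ≤
        Sum.elim (fun _ ↦ G.edist v b + 1) (G.edist · b) y + 1 := by
    rintro (x | x) (y | y) hxy
    · exact le_self_add
    · obtain rfl := functigraph_adj_inl_inr.1 hxy
      exact le_rfl
    · obtain rfl := functigraph_adj_inr_inl.1 hxy
      exact le_self_add.trans le_self_add
    · rw [functigraph_adj_inr_inr] at hxy
      calc G.edist x b ≤ G.edist x y + G.edist y b := G.edist_triangle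
        _ = G.edist y b + 1 := by rw [edist_eq_one_iff_adj.2 hxy, add_comm]
  simpa using le_add_edist_of_forall_adj hle x (Sum.inr b)

theorem edist_functigraph_const_inr_inr :
    (functigraph G fun _ ↦ v).edist (Sum.inr a) (Sum.inr b) = G.edist a b := by
  refine le_antisymm ?_ (elim_edist_le_edist_functigraph_const (Sum.inr a))
  have hle : ∀ x y, G.Adj x y →
      (functigraph G fun _ ↦ v).edist (Sum.inr x) (Sum.inr b) ≤
        (functigraph G fun _ ↦ v).edist (Sum.inr y) (Sum.inr b) + 1 := by
    intro x y hxy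
    rw [add_comm, ← edist_eq_one_iff_adj.2 (functigraph_adj_inr_inr.2 hxy)]
    exact SimpleGraph.edist_triangle
  simpa using le_add_edist_of_forall_adj hle a b

theorem edist_functigraph_const_inl_inr :
    (functigraph G fun _ ↦ v).edist (Sum.inl a) (Sum.inr b) = G.edist v b + 1 := by
  refine le_antisymm ?_ (elim_edist_le_edist_functigraph_const (Sum.inl a))
  calc (functigraph G fun _ ↦ v).edist (Sum.inl a) (Sum.inr b)
      ≤ (functigraph G fun _ ↦ v).edist (Sum.inl a) (Sum.inr v) +
          (functigraph G fun _ ↦ v).edist (Sum.inr v) (Sum.inr b) := SimpleGraph.edist_triangle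
    _ = G.edist v b + 1 := by
      rw [edist_eq_one_iff_adj.2 (functigraph_adj_inl_inr.2 rfl),
        edist_functigraph_const_inr_inr, add_comm]

theorem dist_functigraph_const_inr_inr :
    (functigraph G fun _ ↦ v).dist (Sum.inr a) (Sum.inr b) = G.dist a b :=
  congrArg ENat.toNat edist_functigraph_const_inr_inr

theorem dist_functigraph_const_inl_inr (hvb : G.Reachable v b) :
    (functigraph G fun _ ↦ v).dist (Sum.inl a) (Sum.inr b) = G.dist v b + 1 := by
  rw [SimpleGraph.dist, edist_functigraph_const_inl_inr, ← hvb.coe_dist_eq_edist]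
  rfl

theorem dist_functigraph_const_inr_inl_of_adj (hva : G.Adj v a) :
    (functigraph G fun _ ↦ v).dist (Sum.inr a) (Sum.inl b) = 2 :=
  dist_eq_two_of_adj_adj (z := Sum.inr v) Sum.inr_ne_inl
    (fun h ↦ hva.ne (functigraph_adj_inr_inl.1 h)) (functigraph_adj_inr_inr.2 hva.symm)
    (functigraph_adj_inl_inr.2 rfl)

theorem dist_functigraph_const_inl_inl_of_notMem_closedNbhd
    (hu : Sum.inl u ∉ closedNbhd (functigraph G fun _ ↦ v) S) (ha : Sum.inl a ∈ S) :
    (functigraph G fun _ ↦ v).dist (Sum.inl u) (Sum.inl a) = 2 :=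
  dist_eq_two_of_adj_adj (z := Sum.inr v) (fun h ↦ hu (Or.inl (h ▸ ha)))
    (fun h ↦ hu (Or.inr ⟨_, ha, h⟩)) (functigraph_adj_inl_inr.2 rfl)
    (functigraph_adj_inl_inr.2 rfl)

end ConstantFunctigraph

theorem stmt10_general {V : Type*} {G : SimpleGraph V} {v : V} {S : Set (V ⊕ V)}
    (hG : G.Connected) (hbip : G.IsBipartite) (hv : (G.neighborSet v).Nontrivial)
    (hres : IsResolving (functigraph G fun _ ↦ v) S)
    (hu : ∃ u, Sum.inl u ∉ closedNbhd (functigraph G fun _ ↦ v) S) :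
    {w | Sum.inr w ∈ S}.Nontrivial := by
  obtain ⟨a, ha, b, hb, hab⟩ := hv
  obtain ⟨u, hu⟩ := hu
  by_contra hsub
  rw [Set.not_nontrivial_iff] at hsub
  obtain ⟨k, hk, hk_ab⟩ := hres.exists_inr_mem_dist_ne (Sum.inr_injective.ne hab) fun i _ ↦ by
    rw [dist_functigraph_const_inr_inl_of_adj ha, dist_functigraph_const_inr_inl_of_adj hb]
  rw [dist_functigraph_const_inr_inr, dist_functigraph_const_inr_inr] at hk_ab
  have hcloser : ∀ c, G.Adj v c → G.dist c k + 1 = G.dist v k := by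
    intro c hc
    obtain ⟨l, hl, hl_cu⟩ :=
      hres.exists_inr_mem_dist_ne (Sum.inr_ne_inl (a := u) (b := c)) fun i hi ↦ by
        rw [dist_functigraph_const_inr_inl_of_adj hc,
          dist_functigraph_const_inl_inl_of_notMem_closedNbhd hu hi]
    obtain rfl : l = k := hsub hl hk
    rw [dist_functigraph_const_inr_inr, dist_functigraph_const_inl_inr (hG v l)] at hl_cu
    have hparity := dist_ne_dist_of_isBipartite_of_adj hbip hc (hG v l)
    have hstep := hc.diff_dist_adj (u := l)
    rw [G.dist_comm, G.dist_comm (u := l)] at hstep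
    omega
  exact hk_ab (Nat.succ_injective ((hcloser a ha).trans (hcloser b hb).symm))

section CycleGraph

variable {n : ℕ}

theorem cycGraph_adj {i j : ZMod n} :
    (cycGraph n).Adj i j ↔ i ≠ j ∧ (j = i + 1 ∨ i = j + 1) :=
  fromRel_adj _ _ _

theorem cycGraph_connected (n : ℕ) : (cycGraph n).Connected := by
  have hsucc : ∀ i : ZMod n, (cycGraph n).Reachable i (i + 1) := by
    intro i
    by_cases hi : i = i + 1
    · exact hi ▸ Reachable.rfl
    · exact (cycGraph_adj.2 ⟨hi, Or.inl rfl⟩).reachable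
  refine (connected_iff_exists_forall_reachable _).2 ⟨0, fun i ↦ ?_⟩
  obtain ⟨m, rfl⟩ := ZMod.intCast_surjective i
  induction m with
  | zero => simp
  | succ m ih => simpa using ih.trans (hsucc _)
  | pred m ih => exact ih.trans (by simpa using (hsucc ((-m - 1 : ℤ) : ZMod n)).symm)

theorem cycGraph_isBipartite (hn : Even n) : (cycGraph n).IsBipartite := by
  let parity : ZMod n →+* ZMod 2 := ZMod.castHom hn.two_dvd (ZMod 2)
  refine (Coloring.mk parity fun {i j} hij ↦ ?_).colorable
  rcases (cycGraph_adj.1 hij).2 with rfl | rfl <;> simp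

theorem cycGraph_neighborSet_nontrivial (hn : 2 < n) (i : ZMod n) :
    ((cycGraph n).neighborSet i).Nontrivial := by
  have : Fact (1 < n) := ⟨by omega⟩
  have : Fact (2 < n) := ⟨hn⟩
  refine ⟨i + 1, cycGraph_adj.2 (by simp), i - 1,
    cycGraph_adj.2 (by simp [eq_sub_iff_add_eq]), ?_⟩
  rw [sub_eq_add_neg]
  exact (add_right_injective i).ne ZMod.neg_one_ne_one.symm

end CycleGraph

theorem stmt10 (n : ℕ) (hn : 6 <= n) (hev : Even n) (S : Set (ZMod n ⊕ ZMod n))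
    (hres : IsResolving (functigraph (cycGraph n) (fun _ => (0 : ZMod n))) S)
    (hfin : S.Finite)
    (hmin : S.ncard = metricDim (functigraph (cycGraph n) (fun _ => (0 : ZMod n))))
    (hone : {u : ZMod n |
      Sum.inl u ∉ closedNbhd (functigraph (cycGraph n) (fun _ => (0 : ZMod n))) S}.ncard = 1) :
    2 <= {v : ZMod n | Sum.inr v ∈ S}.ncard := by
  have : NeZero n := ⟨by omega⟩
  exact Set.one_lt_ncard_iff_nontrivial.2 <| stmt10_general (cycGraph_connected n)
    (cycGraph_isBipartite hev) (cycGraph_neighborSet_nontrivial (by omega) 0) hres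
    (Set.nonempty_of_ncard_ne_zero (hone.trans_ne one_ne_zero))
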